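/- Let G be a group having a subgroup K such that |x^G| ≤ n for all x ∈ K. Then there exists a finite normal subgroup T of G (of n-bounded order) such that in G/T, the image of the normal closure ⟨K^G⟩ of K is abelian... equivalently: the derived subgroup of ⟨K^G⟩ is a finite normal subgroup of G of n-bounded order. -/

import Mathlib

/-!
Write `H` for the normal closure of `K`; it is generated by the set `X` of conjugates of elements
of `K`, all of which have at most `n` conjugates. For `x ∈ K` the class `x ^ H` has at most `n`
elements, so it is already the class of `x` under the subgroup generated by fewer than `n` elements
of `X`. Choose `a ∈ K` with `a ^ H` as large as possible, and let `L` be such a subgroup for `a`.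

If `u ∈ K` centralizes `L`, then `(u * a) ^ L = u * a ^ L` has as many elements as `a ^ H`, so
maximality forces `(u * a) ^ H = (u * a) ^ L`. Hence modulo any normal subgroup that contains
`[H, a]` the subgroup `H` centralizes `u * a` and `a`, and therefore `u`. The centralizer of `L` has
bounded index, so `K` is generated by such elements `u` together with a bounded number of
others. Treating these others like `a`, one obtains a set `E ⊆ X` of bounded size, with normal
closure `T`, such that `[H, H] ≤ [T, T]`. The centralizer of `T` has bounded index, and by
Schur's theorem the order of `[T, T]` is bounded.
-/

open scoped commutatorElement Pointwise Finset

section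

open Subgroup

variable {G : Type*} [Group G]

theorem relIndex_le_index_of_ne_zero {C : Subgroup G} (H : Subgroup G) (hC : C.index ≠ 0) :
    C.relIndex H ≤ C.index := by
  rw [← relIndex_top_right] at hC ⊢
  exact relIndex_le_of_le_right le_top hC

theorem relIndex_eq_relIndex_iff_subset_mul {C L H : Subgroup G} (hLH : L ≤ H)
    (hC : C.relIndex H ≠ 0) :
    C.relIndex L = C.relIndex H ↔ (H : Set G) ⊆ L * C := by
  let ι := quotientSubgroupOfEmbeddingOfLE C hLH
  have : Finite (H ⧸ C.subgroupOf H) := Nat.finite_of_card_ne_zero hC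
  have surjective_iff : Function.Surjective ι ↔ (H : Set G) ⊆ L * C := by
    simp only [Function.Surjective, QuotientGroup.forall_mk, QuotientGroup.exists_mk, ι,
      quotientSubgroupOfEmbeddingOfLE_apply_mk, QuotientGroup.eq, mem_subgroupOf]
    constructor
    · intro hsurj h hh
      obtain ⟨l, hl⟩ := hsurj ⟨h, hh⟩
      exact ⟨l, l.2, _, hl, mul_inv_cancel_left _ _⟩
    · rintro hsub ⟨h, hh⟩
      obtain ⟨l, hl, c, hc, rfl⟩ := hsub hh
      exact ⟨⟨l, hl⟩, by simpa using hc⟩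
  rw [← surjective_iff]
  have bijective_iff := Nat.bijective_iff_injective_and_card ι
  exact ⟨fun hcard ↦ (bijective_iff.2 ⟨ι.injective, hcard⟩).surjective,
    fun hsurj ↦ (bijective_iff.1 ⟨ι.injective, hsurj⟩).2⟩

theorem closure_subset_mul_of_forall_insert {X F : Set G} {C : Subgroup G}
    (h : ∀ x ∈ X, (closure (insert x F) : Set G) ⊆ closure F * C) :
    (closure X : Set G) ⊆ closure F * C := by
  intro g hg
  have closure_le_insert (x : G) : closure F ≤ closure (insert x F) :=
    closure_mono (Set.subset_insert x F)
  have mem_insert (x : G) : x ∈ closure (insert x F) := subset_closure (Set.mem_insert x F)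
  have smul_mem {x y : G} (hx : x ∈ X) {z : G} (hz : z ∈ closure (insert x F))
      (hy : y ∈ (closure F : Set G) * C) : z * y ∈ (closure F : Set G) * C := by
    obtain ⟨l, hl, c, hc, rfl⟩ := hy
    obtain ⟨l', hl', c', hc', hlc⟩ := h x hx (mul_mem hz (closure_le_insert x hl))
    exact ⟨l', hl', c' * c, mul_mem hc' hc, by simp [← mul_assoc, ← hlc]⟩
  induction hg using closure_induction_left with
  | one => exact ⟨1, one_mem _, 1, one_mem _, mul_one 1⟩
  | mul_left x hx y _ ih => exact smul_mem hx (mem_insert x) ih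
  | inv_mul_cancel x hx y _ ih => exact smul_mem hx (inv_mem (mem_insert x)) ih

theorem exists_relIndex_closure_insert_lt {C : Subgroup G} {X F : Set G} (hFX : F ⊆ X)
    (hC : C.relIndex (closure X) ≠ 0)
    (hne : C.relIndex (closure F) ≠ C.relIndex (closure X)) :
    ∃ x ∈ X, C.relIndex (closure F) < C.relIndex (closure (insert x F)) := by
  by_contra! hle
  refine hne ((relIndex_eq_relIndex_iff_subset_mul (closure_mono hFX) hC).2
    (closure_subset_mul_of_forall_insert fun x hx ↦ ?_))
  have hFx : closure F ≤ closure (insert x F) := closure_mono (Set.subset_insert x F)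
  have hCx : C.relIndex (closure (insert x F)) ≠ 0 :=
    mt (relIndex_eq_zero_of_le_right (closure_mono (Set.insert_subset hx hFX))) hC
  exact (relIndex_eq_relIndex_iff_subset_mul hFx hCx).1
    ((relIndex_le_of_le_right hFx hCx).antisymm (hle x hx))

theorem exists_finset_relIndex_closure_eq {C : Subgroup G} {X : Set G}
    (hC : C.relIndex (closure X) ≠ 0) :
    ∃ F : Finset G, (F : Set G) ⊆ X ∧ #F < C.relIndex (closure X) ∧
      C.relIndex (closure (F : Set G)) = C.relIndex (closure X) := by
  classical
  -- Adjoining one more element of `X` raises the index until it reaches its final value.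
  have exists_large (k : ℕ) : ∃ F : Finset G, (F : Set G) ⊆ X ∧ #F ≤ k ∧
      (C.relIndex (closure (F : Set G)) = C.relIndex (closure X) ∨
        k < C.relIndex (closure (F : Set G))) := by
    induction k with
    | zero => exact ⟨∅, by simp⟩
    | succ k ih =>
      obtain ⟨F, hFX, hFk, hF⟩ := ih
      by_cases heq : C.relIndex (closure (F : Set G)) = C.relIndex (closure X)
      · exact ⟨F, hFX, by lia, .inl heq⟩
      obtain ⟨x, hx, hlt⟩ := exists_relIndex_closure_insert_lt hFX hC heq
      refine ⟨insert x F, by simp [Set.insert_subset_iff, hx, hFX],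
        (F.card_insert_le x).trans (by lia), .inr ?_⟩
      rw [Finset.coe_insert]
      have := hF.resolve_left heq
      lia
  obtain ⟨F, hFX, hFk, hF⟩ := exists_large (C.relIndex (closure X) - 1)
  have hle := relIndex_le_of_le_right (closure_mono hFX) hC
  exact ⟨F, hFX, by lia, by lia⟩

/-- The elements of `G` that centralize `H` modulo the normal subgroup `N`: the largest subgroup
`Z` with `⁅H, Z⁆ ≤ N`. -/
def centralizerMod (H N : Subgroup G) [N.Normal] : Subgroup G :=
  (centralizer (H.map (QuotientGroup.mk' N) : Set (G ⧸ N))).comap (QuotientGroup.mk' N)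

namespace centralizerMod

variable {H L N : Subgroup G} [N.Normal] {g : G}

theorem mem_iff : g ∈ centralizerMod H N ↔ ∀ h ∈ H, ⁅h, g⁆ ∈ N := by
  simp only [centralizerMod, mem_comap, mem_centralizer_iff_commutator_eq_one, coe_map,
    Set.forall_mem_image, SetLike.mem_coe]
  exact forall₂_congr fun h _ ↦ QuotientGroup.eq_one_iff ⁅h, g⁆

instance [H.Normal] : (centralizerMod H N).Normal :=
  have : (H.map (QuotientGroup.mk' N)).Normal :=
    Normal.map ‹_› _ (QuotientGroup.mk'_surjective N)
  inferInstanceAs (Normal (comap _ _))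

theorem antitone_left (hLH : L ≤ H) : centralizerMod H N ≤ centralizerMod L N :=
  fun _ hg ↦ mem_iff.2 fun l hl ↦ mem_iff.1 hg l (hLH hl)

theorem centralizer_le : centralizer (H : Set G) ≤ centralizerMod H N := fun g hg ↦
  mem_iff.2 fun h hh ↦ by
    rw [mem_centralizer_iff_commutator_eq_one.1 hg h hh]
    exact one_mem N

theorem mem_of_relIndex_centralizer_eq (hLH : L ≤ H) (hg : (centralizer {g}).relIndex H ≠ 0)
    (heq : (centralizer {g}).relIndex L = (centralizer {g}).relIndex H)
    (hgL : g ∈ centralizerMod L N) : g ∈ centralizerMod H N := by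
  refine mem_iff.2 fun h hh ↦ ?_
  obtain ⟨l, hl, c, hc, rfl⟩ := (relIndex_eq_relIndex_iff_subset_mul hLH hg).1 heq hh
  have commute_c : ⁅c, g⁆ = 1 :=
    commutatorElement_eq_one_iff_mul_comm.2 (mem_centralizer_singleton_iff.1 hc)
  simpa [commutatorElement_mul_left_eq_conj_mul, commute_c] using mem_iff.1 hgL l hl

theorem commutator_normalClosure_le {s : Set G}
    (hs : s ⊆ centralizerMod (normalClosure s) N) :
    ⁅normalClosure s, normalClosure s⁆ ≤ N :=
  commutator_le.2 fun _ hx _ hy ↦ mem_iff.1 (normalClosure_le_normal hs hy) _ hx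

end centralizerMod

theorem relIndex_centralizer_mul {L : Subgroup G} {u : G} (hu : u ∈ centralizer (L : Set G))
    (a : G) : (centralizer {u * a}).relIndex L = (centralizer {a}).relIndex L := by
  have subgroupOf_eq : (centralizer {u * a}).subgroupOf L = (centralizer {a}).subgroupOf L := by
    ext l
    have hl : (l : G) * u = u * l := mem_centralizer_iff.1 hu l l.2
    simp only [mem_subgroupOf, mem_centralizer_singleton_iff]
    rw [← mul_assoc, hl, mul_assoc, mul_assoc, mul_right_inj]
  rw [relIndex, relIndex, subgroupOf_eq]

theorem mem_centralizerMod_of_relIndex_centralizer_mul_le {H L N : Subgroup G} [N.Normal]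
    {a u : G} (hLH : L ≤ H) (ha : (centralizer {a}).relIndex L = (centralizer {a}).relIndex H)
    (hua : (centralizer {u * a}).relIndex H ≠ 0)
    (hmax : (centralizer {u * a}).relIndex H ≤ (centralizer {a}).relIndex H)
    (hu : u ∈ centralizer (L : Set G)) (haN : a ∈ centralizerMod H N) :
    u ∈ centralizerMod H N := by
  have hua_eq : (centralizer {u * a}).relIndex L = (centralizer {u * a}).relIndex H := by
    refine (relIndex_le_of_le_right hLH hua).antisymm ?_
    rwa [relIndex_centralizer_mul hu, ha]
  have huaL : u * a ∈ centralizerMod L N :=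
    mul_mem (centralizerMod.centralizer_le hu) (centralizerMod.antitone_left hLH haN)
  have huaH : u * a ∈ centralizerMod H N :=
    centralizerMod.mem_of_relIndex_centralizer_eq hLH hua hua_eq huaL
  exact ((centralizerMod H N).mul_mem_cancel_right haN).1 huaH

theorem index_centralizer_singleton (x : G) :
    (centralizer {x}).index = Nat.card (conjugatesOf x) := by
  have hindex := MulAction.index_stabilizer (ConjAct G) x
  rw [ConjAct.orbit_eq_carrier_conjClasses, ConjAct.stabilizer_eq_centralizer] at hindex
  exact hindex

/-- The elements of `G` whose conjugacy class is finite with at most `n` elements. Finiteness is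
required separately because `Nat.card` of an infinite class is `0`. -/
def boundedClassSet (G : Type*) [Group G] (n : ℕ) : Set G :=
  {x | (conjugatesOf x).Finite ∧ Nat.card (conjugatesOf x) ≤ n}

namespace boundedClassSet

variable {n : ℕ}

theorem conjugatesOfSet_subset {s : Set G} (hs : s ⊆ boundedClassSet G n) :
    Group.conjugatesOfSet s ⊆ boundedClassSet G n := by
  intro x hx
  obtain ⟨y, hy, hyx⟩ := Group.mem_conjugatesOfSet_iff.1 hx
  simpa only [boundedClassSet, Set.mem_ofPred_eq, hyx.conjugatesOf_eq] using hs hy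

theorem index_centralizer_ne_zero {x : G} (hx : x ∈ boundedClassSet G n) :
    (centralizer {x}).index ≠ 0 := by
  have := hx.1.to_subtype
  have : Nonempty (conjugatesOf x) := ⟨x, mem_conjugatesOf_self⟩
  rw [index_centralizer_singleton]
  exact Nat.card_pos.ne'

theorem relIndex_centralizer_ne_zero {x : G} (hx : x ∈ boundedClassSet G n) (H : Subgroup G) :
    (centralizer {x}).relIndex H ≠ 0 :=
  mt index_eq_zero_of_relIndex_eq_zero (index_centralizer_ne_zero hx)

theorem index_centralizer_le {x : G} (hx : x ∈ boundedClassSet G n) :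
    (centralizer {x}).index ≤ n :=
  (index_centralizer_singleton x).trans_le hx.2

theorem relIndex_centralizer_le {x : G} (hx : x ∈ boundedClassSet G n) (H : Subgroup G) :
    (centralizer {x}).relIndex H ≤ n :=
  (relIndex_le_index_of_ne_zero H (index_centralizer_ne_zero hx)).trans (index_centralizer_le hx)

theorem pos_of_mem {x : G} (hx : x ∈ boundedClassSet G n) : 0 < n :=
  (Nat.pos_of_ne_zero (index_centralizer_ne_zero hx)).trans_le (index_centralizer_le hx)

theorem index_centralizer_finset {E : Finset G} (hE : (E : Set G) ⊆ boundedClassSet G n) :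
    (centralizer (E : Set G)).index ≠ 0 ∧ (centralizer (E : Set G)).index ≤ n ^ #E := by
  have eq_iInf : centralizer (E : Set G) = ⨅ x : E, centralizer {(x : G)} := by
    rw [centralizer_eq_iInf, iInf_subtype']
    rfl
  rw [eq_iInf]
  refine ⟨index_iInf_ne_zero fun x ↦ index_centralizer_ne_zero (hE x.2), ?_⟩
  calc (⨅ x : E, centralizer {(x : G)}).index
      ≤ ∏ x : E, (centralizer {(x : G)}).index := index_iInf_le _
    _ ≤ n ^ #(Finset.univ : Finset E) :=
      Finset.prod_le_pow_card _ _ n fun x _ ↦ index_centralizer_le (hE x.2)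
    _ = n ^ #E := by simp

theorem exists_finset_coe_eq_conjugatesOfSet {E : Finset G}
    (hE : (E : Set G) ⊆ boundedClassSet G n) :
    ∃ E' : Finset G, (E' : Set G) = Group.conjugatesOfSet (E : Set G) ∧ #E' ≤ #E * n := by
  classical
  let conjugates (x : E) : Finset G := (hE x.2).1.toFinset
  refine ⟨E.attach.biUnion conjugates, ?_, ?_⟩
  · ext y
    simp [conjugates, Group.conjugatesOfSet]
  · rw [← E.card_attach]
    refine Finset.card_biUnion_le_card_mul _ _ n fun x _ ↦ ?_
    rw [← Set.ncard_eq_toFinset_card _ (hE x.2).1]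
    exact (hE x.2).2

theorem index_centralizer_normalClosure {E : Finset G}
    (hE : (E : Set G) ⊆ boundedClassSet G n) (hn : 0 < n) :
    (centralizer (normalClosure (E : Set G) : Set G)).index ≠ 0 ∧
      (centralizer (normalClosure (E : Set G) : Set G)).index ≤ n ^ (#E * n) := by
  obtain ⟨E', hE', hcard⟩ := exists_finset_coe_eq_conjugatesOfSet hE
  rw [normalClosure, centralizer_closure, ← hE']
  obtain ⟨hne, hle⟩ := index_centralizer_finset (hE' ▸ conjugatesOfSet_subset hE)
  exact ⟨hne, hle.trans (Nat.pow_le_pow_right hn hcard)⟩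

theorem exists_forall_relIndex_centralizer_le {K : Subgroup G}
    (hK : (K : Set G) ⊆ boundedClassSet G n) (H : Subgroup G) :
    ∃ a ∈ K, ∀ x ∈ K, (centralizer {x}).relIndex H ≤ (centralizer {a}).relIndex H := by
  have finite_image : ((fun x ↦ (centralizer {x}).relIndex H) '' (K : Set G)).Finite :=
    (Set.finite_Iic n).subset (Set.image_subset_iff.2 fun x hx ↦ relIndex_centralizer_le (hK hx) H)
  obtain ⟨a, haK, ha⟩ := Set.Finite.exists_maximalFor' _ _ finite_image ⟨1, K.one_mem⟩
  exact ⟨a, haK, fun x hx ↦ (le_total _ _).elim id (ha hx)⟩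

theorem exists_finset_relIndex_centralizer_eq {x : G} (hx : x ∈ boundedClassSet G n) (X : Set G) :
    ∃ F : Finset G, (F : Set G) ⊆ X ∧ #F < n ∧
      (centralizer {x}).relIndex (closure (F : Set G)) =
        (centralizer {x}).relIndex (closure X) := by
  obtain ⟨F, hFX, hcard, hF⟩ :=
    exists_finset_relIndex_closure_eq (relIndex_centralizer_ne_zero hx (closure X))
  exact ⟨F, hFX, hcard.trans_le (relIndex_centralizer_le hx _), hF⟩

theorem exists_finset_mem_centralizerMod_commutator {x : G} (hx : x ∈ boundedClassSet G n)
    {X : Set G} (hxX : x ∈ X) :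
    ∃ F : Finset G, (F : Set G) ⊆ X ∧ #F ≤ n ∧ ∀ (T : Subgroup G) [T.Normal],
      (F : Set G) ⊆ T → x ∈ centralizerMod (closure X) ⁅T, T⁆ := by
  classical
  obtain ⟨F, hFX, hcard, hF⟩ := exists_finset_relIndex_centralizer_eq hx X
  refine ⟨insert x F, by simp [Set.insert_subset_iff, hxX, hFX],
    (F.card_insert_le x).trans hcard, fun T _ hT ↦ ?_⟩
  rw [Finset.coe_insert, Set.insert_subset_iff] at hT
  obtain ⟨hxT, hFT⟩ := hT
  refine centralizerMod.mem_of_relIndex_centralizer_eq (closure_mono hFX)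
    (relIndex_centralizer_ne_zero hx _) hF (centralizerMod.mem_iff.2 fun l hl ↦ ?_)
  exact commutator_mem_commutator ((closure_le T).2 hFT hl) hxT

theorem exists_finset_le_centralizerMod {K : Subgroup G}
    (hK : (K : Set G) ⊆ boundedClassSet G n) {X : Set G} (hX : X ⊆ boundedClassSet G n) :
    ∃ R : Finset G, (R : Set G) ⊆ K ∧ #R ≤ n ^ (n - 1) ∧ ∀ (N : Subgroup G) [N.Normal],
      (R : Set G) ⊆ centralizerMod (closure X) N → K ≤ centralizerMod (closure X) N := by
  classical
  obtain ⟨a, haK, hmax⟩ := exists_forall_relIndex_centralizer_le hK (closure X)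
  obtain ⟨F, hFX, hFn, hF⟩ := exists_finset_relIndex_centralizer_eq (hK haK) X
  let U : Subgroup G := centralizer (F : Set G)
  obtain ⟨hU, hU_le⟩ : U.index ≠ 0 ∧ U.index ≤ n ^ #F := index_centralizer_finset (hFX.trans hX)
  have hUK : U.relIndex (closure (K : Set G)) ≠ 0 := mt index_eq_zero_of_relIndex_eq_zero hU
  obtain ⟨R, hRK, hRU, hR⟩ := exists_finset_relIndex_closure_eq hUK
  refine ⟨insert a R, by simp [Set.insert_subset_iff, haK, hRK], ?_, fun N _ hN x hx ↦ ?_⟩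
  · calc #(insert a R)
        ≤ U.relIndex (closure (K : Set G)) := (R.card_insert_le a).trans hRU
      _ ≤ n ^ #F := (relIndex_le_index_of_ne_zero _ hU).trans hU_le
      _ ≤ n ^ (n - 1) := Nat.pow_le_pow_right (by lia) (by lia)
  · rw [Finset.coe_insert, Set.insert_subset_iff] at hN
    obtain ⟨haN, hRN⟩ := hN
    have subset_mul := (relIndex_eq_relIndex_iff_subset_mul (closure_mono hRK) hUK).1 hR
    obtain ⟨r, hr, u, hu, rfl⟩ := subset_mul (subset_closure hx)
    have hrK : r ∈ K := (closure_le K).2 hRK hr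
    have huaK : u * a ∈ K := mul_mem ((K.mul_mem_cancel_left hrK).1 hx) haK
    refine mul_mem ((closure_le _).2 hRN hr)
      (mem_centralizerMod_of_relIndex_centralizer_mul_le (closure_mono hFX) hF
        (relIndex_centralizer_ne_zero (hK huaK) _) (hmax _ huaK) ?_ haN)
    rwa [centralizer_closure]

theorem exists_finset_commutator_normalClosure_le {K : Subgroup G}
    (hK : (K : Set G) ⊆ boundedClassSet G n) :
    ∃ E : Finset G, (E : Set G) ⊆ boundedClassSet G n ∧ #E ≤ n ^ n ∧
      ⁅normalClosure (K : Set G), normalClosure (K : Set G)⁆ ≤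
        ⁅normalClosure (E : Set G), normalClosure (E : Set G)⁆ := by
  classical
  have hX : Group.conjugatesOfSet (K : Set G) ⊆ boundedClassSet G n := conjugatesOfSet_subset hK
  obtain ⟨R, hRK, hRn, hR⟩ := exists_finset_le_centralizerMod hK hX
  choose F hFX hFn hF using fun r : R ↦ exists_finset_mem_centralizerMod_commutator
    (hK (hRK r.2)) (Group.subset_conjugatesOfSet (hRK r.2))
  refine ⟨R.attach.biUnion F, ?_, ?_, ?_⟩
  · simpa using fun r hr ↦ (hFX ⟨r, hr⟩).trans hX
  · calc #(R.attach.biUnion F)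
        ≤ #R.attach * n := Finset.card_biUnion_le_card_mul _ _ n fun r _ ↦ hFn r
      _ ≤ n ^ (n - 1) * n := by rw [R.card_attach]; gcongr
      _ = n ^ n := Nat.pow_pred_mul (pos_of_mem (hK K.one_mem))
  · refine centralizerMod.commutator_normalClosure_le (hR _ fun r hr ↦ hF ⟨r, hr⟩ _ ?_)
    exact (Finset.coe_subset.2 (Finset.subset_biUnion_of_mem F (R.mem_attach ⟨r, hr⟩))).trans
      subset_normalClosure

end boundedClassSet

theorem commutatorElement_mul_mul_of_mem_center {z w : G} (hz : z ∈ center G) (hw : w ∈ center G)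
    (g h : G) : ⁅g * z, h * w⁆ = ⁅g, h⁆ := by
  have hz' (x : G) : ⁅z, x⁆ = 1 :=
    commutatorElement_eq_one_iff_mul_comm.2 (mem_center_iff.1 hz x).symm
  have hw' (x : G) : ⁅x, w⁆ = 1 := commutatorElement_eq_one_iff_mul_comm.2 (mem_center_iff.1 hw x)
  simp [commutatorElement_mul_left_eq_conj_mul, commutatorElement_mul_right_eq_mul_conj, hz', hw']

theorem commutatorSet_subset_range_out :
    commutatorSet G ⊆ Set.range fun p : (G ⧸ center G) × (G ⧸ center G) ↦ ⁅p.1.out, p.2.out⁆ := by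
  rintro _ ⟨g, h, rfl⟩
  obtain ⟨z, hz⟩ := QuotientGroup.mk_out_eq_mul (center G) g
  obtain ⟨w, hw⟩ := QuotientGroup.mk_out_eq_mul (center G) h
  refine ⟨(g, h), ?_⟩
  simp only [hz, hw, commutatorElement_mul_mul_of_mem_center z.2 w.2]

theorem finite_commutatorSet_of_finiteIndex_center [(center G).FiniteIndex] :
    Finite (commutatorSet G) :=
  (Set.finite_range _).subset commutatorSet_subset_range_out

theorem card_commutatorSet_le_index_center_sq [(center G).FiniteIndex] :
    Nat.card (commutatorSet G) ≤ (center G).index ^ 2 := by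
  calc Nat.card (commutatorSet G)
      ≤ Nat.card (Set.range fun p : (G ⧸ center G) × (G ⧸ center G) ↦ ⁅p.1.out, p.2.out⁆) :=
        Nat.card_mono (Set.finite_range _) commutatorSet_subset_range_out
    _ ≤ Nat.card ((G ⧸ center G) × (G ⧸ center G)) := Finite.card_range_le _
    _ = (center G).index ^ 2 := by rw [Nat.card_prod, sq, index]

/-- A bound for the order of the derived subgroup of a group whose center has index at most `i`: the
group has at most `i ^ 2` commutators, so `Subgroup.card_commutator_dvd_index_center_pow` gives
`i ^ (i * i ^ 2 + 1)`. -/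
def schurBound (i : ℕ) : ℕ := i ^ (i ^ 3 + 1)

theorem schurBound_mono : Monotone schurBound := by
  intro i j hij
  rcases i.eq_zero_or_pos with rfl | hi
  · simp [schurBound]
  · unfold schurBound
    gcongr
    exact hi.trans_le hij

theorem card_commutator_le_schurBound [(center G).FiniteIndex] :
    Nat.card (_root_.commutator G) ≤ schurBound (center G).index := by
  have := finite_commutatorSet_of_finiteIndex_center (G := G)
  have index_pos : 0 < (center G).index := Nat.pos_of_ne_zero FiniteIndex.index_ne_zero
  calc Nat.card (_root_.commutator G)
      ≤ (center G).index ^ ((center G).index * Nat.card (commutatorSet G) + 1) :=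
        Nat.le_of_dvd (pow_pos index_pos _) (card_commutator_dvd_index_center_pow G)
    _ ≤ (center G).index ^ ((center G).index * (center G).index ^ 2 + 1) := by
        gcongr
        exact card_commutatorSet_le_index_center_sq
    _ = schurBound (center G).index := by rw [schurBound, ← pow_succ']

theorem center_eq_centralizer_subgroupOf (T : Subgroup G) :
    center T = (centralizer (T : Set G)).subgroupOf T := by
  ext t
  simp [mem_center_iff, mem_subgroupOf, mem_centralizer_iff, Subtype.ext_iff]

theorem finite_and_card_commutator_le_schurBound {T : Subgroup G}
    (hT : (centralizer (T : Set G)).index ≠ 0) :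
    Finite (⁅T, T⁆ : Subgroup G) ∧
      Nat.card (⁅T, T⁆ : Subgroup G) ≤ schurBound (centralizer (T : Set G)).index := by
  have index_center : (center T).index = (centralizer (T : Set G)).relIndex T := by
    rw [center_eq_centralizer_subgroupOf, relIndex]
  have : (center T).FiniteIndex := ⟨index_center ▸ mt index_eq_zero_of_relIndex_eq_zero hT⟩
  have := finite_commutatorSet_of_finiteIndex_center (G := T)
  have finite_commutator : Finite (_root_.commutator T) := inferInstance
  rw [← T.map_subtype_commutator, card_map_of_injective T.subtype_injective]
  refine ⟨Set.Finite.image T.subtype finite_commutator,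
    card_commutator_le_schurBound.trans (schurBound_mono ?_)⟩
  exact index_center.trans_le (relIndex_le_index_of_ne_zero T hT)

theorem stmt_4_general {n : ℕ} {K : Subgroup G}
    (hK : ∀ x ∈ K, (conjugatesOf x).Finite ∧ Nat.card (conjugatesOf x) ≤ n)
    {H : Subgroup G} (hH : H = normalClosure (K : Set G)) :
    (⁅H, H⁆ : Subgroup G).Normal ∧ Finite (⁅H, H⁆ : Subgroup G) ∧
      Nat.card (⁅H, H⁆ : Subgroup G) ≤ schurBound (n ^ n ^ (n + 1)) := by
  subst hH
  have hn : 0 < n := boundedClassSet.pos_of_mem (hK 1 K.one_mem)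
  obtain ⟨E, hE, hEn, hle⟩ := boundedClassSet.exists_finset_commutator_normalClosure_le hK
  obtain ⟨hT, hTn⟩ := boundedClassSet.index_centralizer_normalClosure hE hn
  obtain ⟨_, hcard⟩ := finite_and_card_commutator_le_schurBound hT
  have hindex : n ^ (#E * n) ≤ n ^ n ^ (n + 1) := by
    rw [pow_succ n n]
    gcongr
  exact ⟨inferInstance, .of_injective _ (inclusion_injective hle),
    (card_le_of_le hle).trans (hcard.trans (schurBound_mono (hTn.trans hindex)))⟩

end

/-- If `|x^G| ≤ n` for all `x` in a subgroup `K`, then the derived subgroup of the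
normal closure `H = ⟨K^G⟩` is a finite normal subgroup of `G` of `n`-bounded order;
equivalently the image of `H` in `G` modulo it is abelian. -/
theorem stmt_4 :
    ∃ f : ℕ → ℕ, ∀ n : ℕ, ∀ (G : Type) [Group G] (K : Subgroup G),
      (∀ x ∈ K, (conjugatesOf x).Finite ∧ Nat.card (conjugatesOf x) ≤ n) →
      ∀ (H : Subgroup G), H = Subgroup.normalClosure (K : Set G) →
        (⁅H, H⁆ : Subgroup G).Normal ∧ Finite (⁅H, H⁆ : Subgroup G) ∧
          Nat.card (⁅H, H⁆ : Subgroup G) ≤ f n :=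
  ⟨fun n ↦ schurBound (n ^ n ^ (n + 1)), fun _ _ _ _ hK _ hH ↦ stmt_4_general hK hH⟩
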